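/- arXiv:2008.00270 — 8 statements merged into one kernel-verified Lean document; each statement's English description precedes it below -/
import Mathlib

section
/- In a tree, any three vertices have a unique median: for all vertices u, v, w of G there exists exactly one vertex m that lies on the path from u to v, on the path from u to w, and on the path from v to w. -/
/-- `m` lies on the path from `a` to `b` in the graph `G`. -/
def onPath {V : Type*} (G : SimpleGraph V) (a m b : V) : Prop :=
  G.dist a m + G.dist m b = G.dist a b

/-- `m` is a median of the vertices `u`, `v`, `w`: it lies on the path from `u` to `v`,
on the path from `u` to `w`, and on the path from `v` to `w`. -/
def isMedian {V : Type*} (G : SimpleGraph V) (m u v w : V) : Prop :=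
  onPath G u m v ∧ onPath G u m w ∧ onPath G v m w

/-- `u` is an ancestor of `v` with respect to the root `r`:
`u` lies on the path from `r` to `v`. -/
def isAncestor {V : Type*} (G : SimpleGraph V) (r u v : V) : Prop :=
  onPath G r u v

/-- `l` is a lowest common ancestor of `u` and `v` with respect to the root `r`. -/
def isLCA {V : Type*} (G : SimpleGraph V) (r l u v : V) : Prop :=
  isAncestor G r l u ∧ isAncestor G r l v ∧
    ∀ a : V, isAncestor G r a u → isAncestor G r a v → isAncestor G r a l

lemma tm_length_eq {V : Type*} {G : SimpleGraph V} (hG : G.IsTree) {a b : V}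
    (p : G.Walk a b) (hp : p.IsPath) : p.length = G.dist a b := by
  obtain ⟨q, hq, hl⟩ := hG.connected.exists_path_of_dist a b
  rw [(hG.existsUnique_path a b).unique hp hq, hl]

lemma tm_onPath_of_append {V : Type*} {G : SimpleGraph V} (hG : G.IsTree) {a m b : V}
    (p : G.Walk a m) (q : G.Walk m b) (h : (p.append q).IsPath) : onPath G a m b := by
  unfold onPath
  rw [← tm_length_eq hG _ h, ← tm_length_eq hG _ h.of_append_left,
    ← tm_length_eq hG _ h.of_append_right, SimpleGraph.Walk.length_append]

lemma tm_getVert {V : Type*} {G : SimpleGraph V} (hG : G.IsTree) {a m b : V}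
    (p : G.Walk a b) (hp : p.IsPath) (h : onPath G a m b) : p.getVert (G.dist a m) = m := by
  obtain ⟨q, hq, hql⟩ := hG.connected.exists_path_of_dist a m
  obtain ⟨r, hr, hrl⟩ := hG.connected.exists_path_of_dist m b
  have hqr : (q.append r).IsPath := by
    apply SimpleGraph.Walk.isPath_of_length_eq_dist
    rw [SimpleGraph.Walk.length_append, hql, hrl]
    exact h
  rw [(hG.existsUnique_path a b).unique hp hqr, SimpleGraph.Walk.getVert_append, hql]
  simp

lemma tm_append_isPath {V : Type*} {G : SimpleGraph V} {a m b : V}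
    (p : G.Walk a m) (q : G.Walk m b) (hp : p.IsPath) (hq : q.IsPath)
    (h : ∀ x ∈ p.support, x ∈ q.support → x = m) : (p.append q).IsPath := by
  rw [SimpleGraph.Walk.isPath_def, SimpleGraph.Walk.support_append, List.nodup_append']
  refine ⟨hp.support_nodup, hq.support_nodup.tail, ?_⟩
  intro x hx hx'
  have hn := hq.support_nodup
  rw [← SimpleGraph.Walk.cons_tail_support, List.nodup_cons] at hn
  have := h x hx (List.mem_of_mem_tail hx')
  subst this
  exact hn.1 hx'

lemma tm_exists {V : Type*} {G : SimpleGraph V} (hG : G.IsTree) (u v w : V) :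
    ∃ m : V, isMedian G m u v w := by
  obtain ⟨p, hp, -⟩ := hG.connected.exists_path_of_dist u v
  obtain ⟨m, hm, hmin⟩ := WellFounded.has_min
    (InvImage.wf (fun x => G.dist x w) Nat.lt_wfRel.wf) {x | x ∈ p.support}
    ⟨u, p.start_mem_support⟩
  obtain ⟨q, s, hq, hs, rfl⟩ := hp.mem_support_iff_exists_append.1 hm
  obtain ⟨r, hr, -⟩ := hG.connected.exists_path_of_dist m w
  have key : ∀ x ∈ (q.append s).support, x ∈ r.support → x = m := by
    intro x hx hxr
    obtain ⟨r1, r2, h1, h2, rfl⟩ := hr.mem_support_iff_exists_append.1 hxr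
    have h3 := tm_onPath_of_append hG r1 r2 hr
    have h4 : ¬ G.dist x w < G.dist m w := hmin x hx
    unfold onPath at h3
    have h5 : G.dist m x = 0 := by omega
    exact (hG.connected.dist_eq_zero_iff.1 h5).symm
  refine ⟨m, tm_onPath_of_append hG q s hp, ?_, ?_⟩
  · refine tm_onPath_of_append hG q r (tm_append_isPath q r hq hr fun x hx hxr => key x ?_ hxr)
    simp [hx]
  · refine tm_onPath_of_append hG s.reverse r
      (tm_append_isPath s.reverse r hs.reverse hr fun x hx hxr => key x ?_ hxr)
    have : x ∈ s.support := by simpa using hx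
    simp [this]

/-- In a tree, any three vertices have a unique median. -/
theorem tree_median_existsUnique {V : Type*} [Fintype V] (G : SimpleGraph V)
    (hG : G.IsTree) (u v w : V) :
    ∃! m : V, isMedian G m u v w := by
  obtain ⟨m, hm⟩ := tm_exists hG u v w
  refine ⟨m, hm, ?_⟩
  intro m' hm'
  obtain ⟨p, hp, -⟩ := hG.connected.exists_path_of_dist u v
  rw [← tm_getVert hG p hp hm.1, ← tm_getVert hG p hp hm'.1]
  congr 1
  obtain ⟨h1, h2, h3⟩ := hm
  obtain ⟨h1', h2', h3'⟩ := hm'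
  unfold onPath at *
  have e1 := G.dist_comm (u := m) (v := v)
  have e2 := G.dist_comm (u := m') (v := v)
  omega
end

section
/- Case 1 of the meeting-point analysis: in a rooted tree, if q is an ancestor of u and q is an ancestor of v, then the median of u, v, q equals the lowest common ancestor of u and v. -/
/-- Case 1: if `q` is an ancestor of both `u` and `v`, then the median of
`u`, `v`, `q` equals the LCA of `u` and `v`. -/
theorem median_case1 {V : Type*} [Fintype V] (G : SimpleGraph V)
    (hG : G.IsTree) (r u v q : V)
    (hqu : isAncestor G r q u) (hqv : isAncestor G r q v) :
    ∀ m l : V, isMedian G m u v q → isLCA G r l u v → m = l := by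
  intro m l hm hl
  obtain ⟨h1, h2, h3⟩ := hm
  obtain ⟨h4, h5, h6⟩ := hl
  have hc := hG.1
  have tri : ∀ a b c : V, G.dist a c ≤ G.dist a b + G.dist b c :=
    fun a b c => hc.dist_triangle
  have key : G.dist m l = 0 := by
    have hml := h6 m
    simp only [isAncestor, onPath] at *
    have cu := G.dist_comm (u := u) (v := m)
    have cv := G.dist_comm (u := v) (v := m)
    have cq := G.dist_comm (u := m) (v := q)
    have cqu := G.dist_comm (u := u) (v := q)
    have cqv := G.dist_comm (u := v) (v := q)
    have cl := G.dist_comm (u := u) (v := l)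
    have t1 := tri r q m
    have t2 := tri r m u
    have t3 := tri r m v
    have t4 := tri u l v
    have := hml (by omega) (by omega)
    omega
  exact hc.dist_eq_zero_iff.1 key
end

section
/- Case 2 of the meeting-point analysis: in a rooted tree, if q is an ancestor of u but q is not an ancestor of v, then the median of u, v, q equals q. -/
theorem closer_unique {V : Type*} {G : SimpleGraph V} (hG : G.IsTree) {r x y z : V}
    (hx : G.Adj x y) (hz : G.Adj z y) (dx : G.dist r y = G.dist r x + 1)
    (dz : G.dist r y = G.dist r z + 1) : x = z := by
  obtain ⟨p, hp⟩ := hG.1.exists_walk_length_eq_dist r x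
  obtain ⟨q, hq⟩ := hG.1.exists_walk_length_eq_dist r z
  have h1 : (p.concat hx).IsPath :=
    SimpleGraph.Walk.isPath_of_length_eq_dist _ (by simp [hp, dx])
  have h2 : (q.concat hz).IsPath :=
    SimpleGraph.Walk.isPath_of_length_eq_dist _ (by simp [hq, dz])
  have h3 := (hG.existsUnique_path r y).unique h1 h2
  have h4 := congrArg SimpleGraph.Walk.penultimate h3
  simpa using h4

theorem walk_away {V : Type*} {G : SimpleGraph V} (hG : G.IsTree) {r y v : V}
    (p : G.Walk y v) : ∀ {x : V} (hx : G.Adj x y), (SimpleGraph.Walk.cons hx p).IsPath →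
      G.dist r y = G.dist r x + 1 → G.dist r v = G.dist r y + p.length := by
  induction p with
  | nil => intros; simp
  | @cons y z v h p ih =>
    intro x hx hp d
    have hp' := hp
    rw [SimpleGraph.Walk.cons_isPath_iff] at hp'
    have hd : G.dist r z = G.dist r y + 1 := by
      rcases hG.dist_eq_dist_add_one_of_adj r h with h1 | h1
      · exfalso
        have := closer_unique hG hx h.symm d h1
        subst this
        exact hp'.2 (by simp)
      · exact h1
    rw [ih h hp'.1 hd, hd, SimpleGraph.Walk.length_cons]
    omega

/-- Case 2: if `q` is an ancestor of `u` but not of `v`, then the median of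
`u`, `v`, `q` equals `q`. -/
theorem median_case2 {V : Type*} [Fintype V] (G : SimpleGraph V)
    (hG : G.IsTree) (r u v q : V)
    (hqu : isAncestor G r q u) (hqv : ¬ isAncestor G r q v) :
    ∀ m : V, isMedian G m u v q → m = q := by
  rintro m ⟨-, h2, h3⟩
  by_contra hne
  apply hqv
  unfold isAncestor onPath at *
  obtain ⟨p, hp⟩ := hG.1.exists_walk_length_eq_dist q m
  obtain ⟨s, hs⟩ := hG.1.exists_walk_length_eq_dist m v
  have c1 := G.dist_comm (u := u) (v := m)
  have c2 := G.dist_comm (u := u) (v := q)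
  have c3 := G.dist_comm (u := v) (v := m)
  have c4 := G.dist_comm (u := v) (v := q)
  have c5 := G.dist_comm (u := m) (v := q)
  have hl : (p.append s).length = G.dist q v := by
    rw [SimpleGraph.Walk.length_append]; omega
  have hpath := SimpleGraph.Walk.isPath_of_length_eq_dist _ hl
  cases p with
  | nil => exact (hne rfl).elim
  | @cons _ y _ h p =>
    rw [SimpleGraph.Walk.cons_append] at hpath hl
    have t1 : G.dist r u ≤ G.dist r m + G.dist m u := hG.1.dist_triangle
    have t2 : G.dist r m ≤ G.dist r y + G.dist y m := hG.1.dist_triangle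
    have t3 := SimpleGraph.dist_le p
    rw [SimpleGraph.Walk.length_cons] at hp hl
    have hd : G.dist r y = G.dist r q + 1 := by
      rcases hG.dist_eq_dist_add_one_of_adj r h with h1 | h1 <;> omega
    have := walk_away hG (p.append s) h hpath hd
    omega
end

section
/- Case 3 of the meeting-point analysis: in a rooted tree, if u is an ancestor of q and dist(v,q) ≤ dist(u,q), then u is an ancestor of v, and the median of u, v, q equals the lowest common ancestor of v and q. -/
theorem onPath_of_mem_geodesic {V : Type*} (G : SimpleGraph V) {a m b : V}
    (hc : G.Connected) (p : G.Walk a b) (hp : p.length = G.dist a b) (hm : m ∈ p.support) :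
    onPath G a m b := by
  classical
  unfold onPath
  have h := congrArg SimpleGraph.Walk.length (p.take_spec hm)
  rw [SimpleGraph.Walk.length_append] at h
  have h1 := SimpleGraph.dist_le (p.takeUntil m hm)
  have h2 := SimpleGraph.dist_le (p.dropUntil m hm)
  have h3 := hc.dist_triangle (u := a) (v := m) (w := b)
  omega

/-- In a tree, a vertex on the path from `a` to `b` is on the path from `a` to `x` or from
`x` to `b`. -/
theorem onPath_split {V : Type*} (G : SimpleGraph V) (hG : G.IsTree) {a m b : V}
    (h : onPath G a m b) (x : V) : onPath G a m x ∨ onPath G x m b := by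
  classical
  have hc := hG.1
  obtain ⟨p, hp⟩ := hc.exists_walk_length_eq_dist a m
  obtain ⟨p', hp'⟩ := hc.exists_walk_length_eq_dist m b
  obtain ⟨q, hq⟩ := hc.exists_walk_length_eq_dist a x
  obtain ⟨q', hq'⟩ := hc.exists_walk_length_eq_dist x b
  have hpath : (p.append p').IsPath := by
    apply SimpleGraph.Walk.isPath_of_length_eq_dist
    rw [SimpleGraph.Walk.length_append, hp, hp']
    exact h
  have heq : p.append p' = (q.append q').bypass :=
    (hG.existsUnique_path a b).unique hpath (SimpleGraph.Walk.bypass_isPath _)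
  have hm : m ∈ (p.append p').support := by
    simp [SimpleGraph.Walk.mem_support_append_iff]
  rw [heq] at hm
  have hm2 := SimpleGraph.Walk.support_bypass_subset _ hm
  rcases (SimpleGraph.Walk.mem_support_append_iff _ _).1 hm2 with h1 | h1
  · exact Or.inl (onPath_of_mem_geodesic G hc q hq h1)
  · exact Or.inr (onPath_of_mem_geodesic G hc q' hq' h1)

/-- Case 3: if `u` is an ancestor of `q` and `dist(v,q) ≤ dist(u,q)`, then `u`
is an ancestor of `v`, and the median of `u`, `v`, `q` equals the LCA of `v`
and `q`. -/
theorem median_case3 {V : Type*} [Fintype V] (G : SimpleGraph V)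
    (hG : G.IsTree) (r u v q : V)
    (huq : isAncestor G r u q) (hd : G.dist v q ≤ G.dist u q) :
    isAncestor G r u v ∧
      ∀ m l : V, isMedian G m u v q → isLCA G r l v q → m = l := by
  have hc := hG.1
  have huv : isAncestor G r u v := by
    rcases onPath_split G hG huq v with h | h
    · exact h
    · have h0 : G.dist v u = 0 := by
        unfold onPath at h
        omega
      rw [hc.dist_eq_zero_iff] at h0
      subst h0
      simp [isAncestor, onPath]
  refine ⟨huv, ?_⟩
  rintro m l ⟨hm1, hm2, hm3⟩ ⟨hl1, hl2, hl3⟩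
  have t1 := hc.dist_triangle (u := r) (v := u) (w := m)
  have t2 := hc.dist_triangle (u := r) (v := m) (w := v)
  have t3 := hc.dist_triangle (u := r) (v := m) (w := q)
  have hs := onPath_split G hG hm3 l
  have c1 := G.dist_comm (u := v) (v := m)
  have c2 := G.dist_comm (u := v) (v := l)
  have c3 := G.dist_comm (u := l) (v := m)
  have ha := hl3 m (by unfold isAncestor onPath at *; omega)
    (by unfold isAncestor onPath at *; omega)
  rw [← hc.dist_eq_zero_iff]
  unfold isAncestor onPath at *
  omega
end

section
/- Meeting-time characterization for two walkers moving toward a common target in a tree: let u, v, q be vertices with dist(v,q) ≤ dist(u,q), let t be the median of u, v, q, and set s* = dist(v,t). Then s* ≤ dist(v,q), s* ≤ dist(u,q), the walker position v_{s*} equals t and t lies on the path from u_{s*} to q; and for every s < s*, the vertex v_s does not lie on the path from u_s to q. -/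
theorem mt_onPath_of_mem {V : Type*} (G : SimpleGraph V) {a b m : V} (p : G.Walk a b)
    (hp : m ∈ p.support) : G.dist a m + G.dist m b ≤ p.length := by
  classical
  have h := congrArg SimpleGraph.Walk.length (p.take_spec hp)
  rw [SimpleGraph.Walk.length_append] at h
  have h1 := SimpleGraph.dist_le (p.takeUntil m hp)
  have h2 := SimpleGraph.dist_le (p.dropUntil m hp)
  omega

theorem mt_chain {V : Type*} (G : SimpleGraph V) (hG : G.IsTree) {a b m n : V}
    (hm : onPath G a m b) (hn : onPath G a n b) (h : G.dist a m ≤ G.dist a n) :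
    G.dist a m + G.dist m n = G.dist a n := by
  unfold onPath at hm hn
  have hc := hG.connected
  obtain ⟨p1, l1⟩ := hc.exists_walk_length_eq_dist a m
  obtain ⟨p2, l2⟩ := hc.exists_walk_length_eq_dist m b
  obtain ⟨q1, k1⟩ := hc.exists_walk_length_eq_dist a n
  obtain ⟨q2, k2⟩ := hc.exists_walk_length_eq_dist n b
  have hp : (p1.append p2).IsPath := by
    apply SimpleGraph.Walk.isPath_of_length_eq_dist
    rw [SimpleGraph.Walk.length_append]; omega
  have hq : (q1.append q2).IsPath := by
    apply SimpleGraph.Walk.isPath_of_length_eq_dist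
    rw [SimpleGraph.Walk.length_append]; omega
  have he := (hG.existsUnique_path a b).unique hp hq
  have hmem : m ∈ (q1.append q2).support := by
    rw [← he, SimpleGraph.Walk.mem_support_append_iff]
    exact Or.inl p1.end_mem_support
  have tri : G.dist a n ≤ G.dist a m + G.dist m n := hc.dist_triangle
  rcases SimpleGraph.Walk.mem_support_append_iff _ _ |>.1 hmem with h1 | h1
  · have := mt_onPath_of_mem G q1 h1
    omega
  · have := mt_onPath_of_mem G q2 h1
    rw [SimpleGraph.dist_comm (u := n) (v := m)] at this
    omega

/-- Meeting-time characterization for two walkers moving toward a common target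
`q` in a tree.  For a vertex `a` and `s ≤ dist(a,q)`, the position `a_s` after
walking `s` steps from `a` toward `q` is the unique vertex `x` with
`onPath G a x q` and `dist a x = s`.  With `t` the median of `u`, `v`, `q` and
`s* = dist(v,t)`: `s* ≤ dist(v,q)`, `s* ≤ dist(u,q)`, the walker position
`v_{s*}` equals `t`, `t` lies on the path from `u_{s*}` to `q`, and for every
`s < s*` the vertex `v_s` does not lie on the path from `u_s` to `q`. -/
theorem meeting_time_characterization {V : Type*} [Fintype V] (G : SimpleGraph V)
    (hG : G.IsTree) (u v q t : V)
    (hd : G.dist v q ≤ G.dist u q)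
    (ht : isMedian G t u v q) :
    G.dist v t ≤ G.dist v q ∧
    G.dist v t ≤ G.dist u q ∧
    (onPath G v t q ∧ ∀ y : V, onPath G v y q → G.dist v y = G.dist v t → y = t) ∧
    (∀ x : V, onPath G u x q → G.dist u x = G.dist v t → onPath G x t q) ∧
    (∀ s : ℕ, s < G.dist v t →
      ∀ x y : V, onPath G u x q → G.dist u x = s →
        onPath G v y q → G.dist v y = s → ¬ onPath G x y q) := by
  obtain ⟨huv, huq, hvq⟩ := ht
  have hc := hG.connected
  have e1 : G.dist u t + G.dist t v = G.dist u v := huv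
  have e2 : G.dist u t + G.dist t q = G.dist u q := huq
  have e3 : G.dist v t + G.dist t q = G.dist v q := hvq
  have c1 : G.dist t v = G.dist v t := SimpleGraph.dist_comm
  refine ⟨by omega, by omega, ⟨hvq, ?_⟩, ?_, ?_⟩
  · intro y hy hyt
    have := mt_chain G hG hy hvq hyt.le
    exact hc.dist_eq_zero_iff.1 (by omega)
  · intro x hx hxt
    have := mt_chain G hG hx huq (by omega)
    unfold onPath at hx ⊢
    omega
  · intro s hs x y hx hxs hy hys hxy
    have b1 := mt_chain G hG hy hvq (by omega)
    have hx' : G.dist u x + G.dist x q = G.dist u q := hx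
    have hy' : G.dist v y + G.dist y q = G.dist v q := hy
    have hxy' : G.dist x y + G.dist y q = G.dist x q := hxy
    have t1 : G.dist u y ≤ G.dist u x + G.dist x y := hc.dist_triangle
    have t2 : G.dist u q ≤ G.dist u y + G.dist y q := hc.dist_triangle
    have t3 : G.dist u v ≤ G.dist u y + G.dist y v := hc.dist_triangle
    have c2 : G.dist y v = G.dist v y := SimpleGraph.dist_comm
    have huy : onPath G u y q := by unfold onPath; omega
    have b2 := mt_chain G hG huy huq (by omega)
    omega
end

section
/- (Lemma 2 of the paper) In the Chrobak–Larmore process, for every server i with 2 ≤ i ≤ k, the number of phases D_i during which server i is active (equivalently, the distance it travels before it becomes inactive, since it moves exactly one step in each phase where it is active) equals min over j with 1 ≤ j < i of d_{i,j}, where d_{i,j} = dist(v_j, t_{i,j}) and t_{i,j} is the median of v_i, v_j, q. -/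
/-- Server `i` is active at time `s` in the Chrobak–Larmore process: there is no
`j ≠ i` such that `p j s` lies on the path from `p i s` to the request `q` and
(`p j s ≠ p i s`, or `p j s = p i s` and `j < i`). -/
def clActive {V : Type*} (G : SimpleGraph V) (q : V) {k : ℕ}
    (p : Fin k → ℕ → V) (i : Fin k) (s : ℕ) : Prop :=
  ¬ ∃ j : Fin k, j ≠ i ∧ onPath G (p i s) (p j s) q ∧
      (p j s ≠ p i s ∨ (p j s = p i s ∧ j < i))

/-- The Chrobak–Larmore process: `p i 0 = v i`; in each phase every active
server moves one step along the unique path from its current position toward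
`q`, and every inactive server stays in place. -/
def clProcess {V : Type*} (G : SimpleGraph V) (q : V) {k : ℕ}
    (v : Fin k → V) (p : Fin k → ℕ → V) : Prop :=
  (∀ i : Fin k, p i 0 = v i) ∧
  ∀ (i : Fin k) (s : ℕ),
    (clActive G q p i s →
      onPath G (p i s) (p i (s + 1)) q ∧
      G.dist (p i (s + 1)) q = G.dist (p i s) q - 1) ∧
    (¬ clActive G q p i s → p i (s + 1) = p i s)

theorem onPath_of_mem {V : Type*} {G : SimpleGraph V} (hc : G.Connected) {a n b : V}
    (w : G.Walk a b) (hw : w.length = G.dist a b) (hn : n ∈ w.support) : onPath G a n b := by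
  classical
  have h1 := G.dist_le (w.takeUntil n hn)
  have h2 := G.dist_le (w.dropUntil n hn)
  have h3 := congrArg SimpleGraph.Walk.length (w.take_spec hn)
  rw [SimpleGraph.Walk.length_append] at h3
  have h4 := hc.dist_triangle (u := a) (v := n) (w := b)
  unfold onPath
  omega

theorem onPath_trans {V : Type*} {G : SimpleGraph V} (hc : G.Connected) {a m n q : V}
    (h1 : onPath G a m q) (h2 : onPath G m n q) : onPath G a n q := by
  unfold onPath at *
  have h3 := hc.dist_triangle (u := a) (v := m) (w := n)
  have h4 := hc.dist_triangle (u := a) (v := n) (w := q)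
  omega

theorem exists_path_through {V : Type*} {G : SimpleGraph V} (hc : G.Connected) {a m q : V}
    (h : onPath G a m q) : ∃ (w1 : G.Walk a m) (w2 : G.Walk m q),
      w1.length = G.dist a m ∧ w2.length = G.dist m q ∧ (w1.append w2).IsPath := by
  obtain ⟨w1, h1⟩ := hc.exists_walk_length_eq_dist a m
  obtain ⟨w2, h2⟩ := hc.exists_walk_length_eq_dist m q
  refine ⟨w1, w2, h1, h2, ?_⟩
  apply SimpleGraph.Walk.isPath_of_length_eq_dist
  rw [SimpleGraph.Walk.length_append, h1, h2]
  exact h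

theorem onPath_chain {V : Type*} {G : SimpleGraph V} (hG : G.IsTree) {a m n q : V}
    (hm : onPath G a m q) (hn : onPath G a n q) (hle : G.dist n q ≤ G.dist m q) :
    onPath G m n q := by
  have hc := hG.connected
  obtain ⟨w1, w2, h1, h2, hp⟩ := exists_path_through hc hm
  obtain ⟨u1, u2, g1, g2, hp'⟩ := exists_path_through hc hn
  have he : w1.append w2 = u1.append u2 :=
    congrArg Subtype.val (hG.IsAcyclic.path_unique ⟨_, hp⟩ ⟨_, hp'⟩)
  have hmem : n ∈ (w1.append w2).support := by
    rw [he, SimpleGraph.Walk.mem_support_append_iff]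
    exact Or.inl u1.end_mem_support
  rw [SimpleGraph.Walk.mem_support_append_iff] at hmem
  rcases hmem with h | h
  · have h3 := onPath_of_mem hc w1 h1 h
    unfold onPath at *
    have h4 : G.dist n m = 0 := by omega
    have h5 := hc.dist_eq_zero_iff.1 h4
    subst h5
    simp
  · exact onPath_of_mem hc w2 h2 h

theorem cl_anc {V : Type*} {G : SimpleGraph V} (hc : G.Connected) {k : ℕ} {q : V}
    {v : Fin k → V} {p : Fin k → ℕ → V} (hp : clProcess G q v p) (m : Fin k) (s : ℕ) :
    onPath G (v m) (p m s) q ∧ G.dist (v m) q - s ≤ G.dist (p m s) q := by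
  induction s with
  | zero => rw [hp.1 m]; simp [onPath]
  | succ s ih =>
    by_cases ha : clActive G q p m s
    · obtain ⟨h1, h2⟩ := (hp.2 m s).1 ha
      exact ⟨onPath_trans hc ih.1 h1, by omega⟩
    · rw [(hp.2 m s).2 ha]
      exact ⟨ih.1, by omega⟩

theorem cl_active_dist {V : Type*} {G : SimpleGraph V} {k : ℕ} {q : V}
    {v : Fin k → V} {p : Fin k → ℕ → V} (hp : clProcess G q v p) (i : Fin k) (s : ℕ)
    (h : ∀ r < s, clActive G q p i r) : G.dist (p i s) q = G.dist (v i) q - s := by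
  induction s with
  | zero => rw [hp.1 i]; simp
  | succ s ih =>
    have h1 := ih (fun r hr => h r (by omega))
    have h2 := ((hp.2 i s).1 (h s (by omega))).2
    omega

theorem cl_invariant {V : Type*} {G : SimpleGraph V} (hG : G.IsTree) {k : ℕ} {q : V}
    {v : Fin k → V} (hord : ∀ i j : Fin k, i ≤ j → G.dist (v i) q ≤ G.dist (v j) q)
    {p : Fin k → ℕ → V} (hp : clProcess G q v p) (j : Fin k) (s : ℕ) :
    ∃ m : Fin k, m ≤ j ∧ onPath G (v j) (p m s) q ∧
      G.dist (p m s) q ≤ G.dist (v j) q - s := by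
  have hc := hG.connected
  induction s with
  | zero => exact ⟨j, le_rfl, by rw [hp.1 j]; simp [onPath], by rw [hp.1 j]; simp⟩
  | succ s ih =>
    obtain ⟨m0, hm0, ho0, hd0⟩ := ih
    -- pick the lexicographically minimal server on the path
    obtain ⟨m, hmS, hmin⟩ := Set.exists_min_image {m : Fin k | onPath G (v j) (p m s) q}
      (fun m => toLex (G.dist (p m s) q, m)) (Set.toFinite _) ⟨m0, ho0⟩
    simp only [Set.mem_setOf_eq, Prod.Lex.toLex_le_toLex] at hmS hmin
    have hmj : m ≤ j := by
      by_contra hlt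
      have h1 := hord j m (le_of_lt (not_le.1 hlt))
      have h2 := (cl_anc hc hp m s).2
      rcases hmin m0 ho0 with h | ⟨_, h⟩
      · omega
      · exact hlt (h.trans hm0)
    have hmd : G.dist (p m s) q ≤ G.dist (v j) q - s := by
      rcases hmin m0 ho0 with h | ⟨h, _⟩ <;> omega
    have hact : clActive G q p m s := by
      rintro ⟨l, hlm, hl, hlt⟩
      have hl' := onPath_trans hc hmS hl
      rcases hmin l hl' with h | ⟨h, h'⟩
      · unfold onPath at hl; omega
      · rcases hlt with hne | ⟨_, hlt⟩
        · unfold onPath at hl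
          have h0 : G.dist (p m s) (p l s) = 0 := by omega
          exact hne (hc.dist_eq_zero_iff.1 h0).symm
        · exact absurd hlt (not_lt.2 h')
    obtain ⟨h1, h2⟩ := (hp.2 m s).1 hact
    exact ⟨m, hmj, onPath_trans hc hmS h1, by omega⟩

/-- Lemma 2 of the paper: for every server `i` with `i ≥ 2` (index `≥ 1` here),
the number of phases during which server `i` is active, i.e. the least time `D`
at which it is inactive, equals `min_{j < i} dist(v j, t i j)` where `t i j` is
the median of `v i`, `v j`, `q`. -/
theorem chrobakLarmore_distance_to_inactive {V : Type*} [Fintype V]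
    (G : SimpleGraph V) (hG : G.IsTree)
    (k : ℕ) (hk : 2 ≤ k) (q : V) (v : Fin k → V)
    (hinj : Function.Injective v)
    (hord : ∀ i j : Fin k, i ≤ j → G.dist (v i) q ≤ G.dist (v j) q)
    (p : Fin k → ℕ → V) (hp : clProcess G q v p)
    (t : Fin k → Fin k → V)
    (ht : ∀ i j : Fin k, isMedian G (t i j) (v i) (v j) q)
    (i : Fin k) (hi : 0 < (i : ℕ))
    (D : ℕ) (hD : IsLeast {s : ℕ | ¬ clActive G q p i s} D) :
    D = sInf {d : ℕ | ∃ j : Fin k, j < i ∧ d = G.dist (v j) (t i j)} := by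
  have hc := hG.connected
  have hact : ∀ r < D, clActive G q p i r := by
    intro r hr
    by_contra h
    exact absurd (hD.2 h) (by omega)
  apply le_antisymm
  · apply le_csInf
    · exact ⟨_, ⟨0, by omega⟩, Fin.lt_def.2 hi, rfl⟩
    · rintro d ⟨j, hj, rfl⟩
      by_contra hlt
      rw [not_le] at hlt
      apply hact _ hlt
      obtain ⟨m, hmj, hmo, hmd⟩ := cl_invariant hG hord hp j (G.dist (v j) (t i j))
      have hdi := cl_active_dist hp i (G.dist (v j) (t i j))
        (fun r hr => hact r (hr.trans hlt))
      have hanc := (cl_anc hc hp i (G.dist (v j) (t i j))).1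
      obtain ⟨-, hti, htj⟩ := ht i j
      have hle := hord j i hj.le
      have hmt : onPath G (t i j) (p m (G.dist (v j) (t i j))) q := by
        apply onPath_chain hG htj hmo
        unfold onPath at htj
        omega
      have hmi := onPath_trans hc hti hmt
      refine ⟨m, (hmj.trans_lt hj).ne, onPath_chain hG hanc hmi (by omega), ?_⟩
      by_cases he : p m (G.dist (v j) (t i j)) = p i (G.dist (v j) (t i j))
      · exact Or.inr ⟨he, hmj.trans_lt hj⟩
      · exact Or.inl he
  · have hna := hD.1
    simp only [Set.mem_setOf_eq, clActive, not_not] at hna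
    obtain ⟨m, hmi, hmo, hm⟩ := hna
    have hdi := cl_active_dist hp i D hact
    obtain ⟨hai, -⟩ := cl_anc hc hp i D
    obtain ⟨ham, hdm⟩ := cl_anc hc hp m D
    have hmlt : m < i := by
      rcases hm with hne | ⟨_, h⟩
      · by_contra hlt
        have h1 := hord i m (not_lt.1 hlt)
        unfold onPath at hmo
        have h0 : G.dist (p i D) (p m D) = 0 := by omega
        exact hne (hc.dist_eq_zero_iff.1 h0).symm
      · exact h
    refine le_trans (Nat.sInf_le ⟨m, hmlt, rfl⟩) ?_
    have hmi' := onPath_trans hc hai hmo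
    obtain ⟨h1, h2, h3⟩ := ht i m
    have h4 := hc.dist_triangle (u := v i) (v := p m D) (w := v m)
    rw [G.dist_comm (u := p m D) (v := v m)] at h4
    unfold onPath at *
    rw [G.dist_comm (u := t i m) (v := v m)] at h1
    omega
end

section
/- In the Chrobak–Larmore process, server 1 (a server whose initial position is closest to the request q) never becomes inactive: server 1 is active at every time s < dist(v_1,q), and its position after dist(v_1,q) phases is q; hence the process serves the request after exactly dist(v_1,q) phases. -/
/-- In the Chrobak–Larmore process, server 1 (index `0` here, whose initial
position is closest to the request `q`) never becomes inactive: it is active at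
every time `s < dist(v 1, q)` and its position after `dist(v 1, q)` phases is
`q`. -/
theorem chrobakLarmore_first_server_serves {V : Type*} [Fintype V]
    (G : SimpleGraph V) (hG : G.IsTree)
    (k : ℕ) (hk : 2 ≤ k) (q : V) (v : Fin k → V)
    (hinj : Function.Injective v)
    (hord : ∀ i j : Fin k, i ≤ j → G.dist (v i) q ≤ G.dist (v j) q)
    (p : Fin k → ℕ → V) (hp : clProcess G q v p) :
    (∀ s : ℕ, s < G.dist (v ⟨0, by omega⟩) q → clActive G q p ⟨0, by omega⟩ s) ∧
    p ⟨0, by omega⟩ (G.dist (v ⟨0, by omega⟩) q) = q := by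
  obtain ⟨h0, hstep⟩ := hp
  have hlow : ∀ (j : Fin k) (s : ℕ), G.dist (v j) q - s ≤ G.dist (p j s) q := by
    intro j s
    induction s with
    | zero => simp [h0]
    | succ s ih =>
      by_cases h : clActive G q p j s
      · have := ((hstep j s).1 h).2
        omega
      · rw [(hstep j s).2 h]
        omega
  have hact : ∀ s : ℕ, G.dist (p ⟨0, by omega⟩ s) q = G.dist (v ⟨0, by omega⟩) q - s →
      clActive G q p ⟨0, by omega⟩ s := by
    rintro s hs ⟨j, hj, hpath, hor⟩
    have h1 := hlow j s
    have h2 := hord ⟨0, by omega⟩ j (Nat.zero_le _)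
    unfold onPath at hpath
    have h3 : G.dist (p ⟨0, by omega⟩ s) (p j s) = 0 := by omega
    have h4 := (hG.connected.dist_eq_zero_iff).1 h3
    rcases hor with h | ⟨_, h⟩
    · exact h h4.symm
    · exact absurd h (Nat.not_lt_zero _)
  have hdist : ∀ s : ℕ,
      G.dist (p ⟨0, by omega⟩ s) q = G.dist (v ⟨0, by omega⟩) q - s := by
    intro s
    induction s with
    | zero => simp [h0]
    | succ s ih =>
      have := ((hstep _ s).1 (hact s ih)).2
      omega
  refine ⟨fun s _ => hact s (hdist s), ?_⟩
  apply (hG.connected.dist_eq_zero_iff).1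
  rw [hdist, Nat.sub_self]
end

section
/- Correctness of the Move procedure: in a rooted tree, let v and q be vertices, let l be the lowest common ancestor of v and q with respect to the root r, let 0 ≤ z ≤ dist(v,q), and let w be the unique vertex lying on the path from v to q with dist(v,w) = z. If z ≤ dist(v,l), then w is the unique vertex lying on the path from v to r with dist(v,w) = z; if z > dist(v,l), then w is the unique vertex lying on the path from q to r with dist(q,w) = dist(l,q) − (z − dist(v,l)). -/
theorem aux_unique {V : Type*} {G : SimpleGraph V} (hG : G.IsTree) {a b m m' : V}
    (h : onPath G a m b) (h' : onPath G a m' b) (he : G.dist a m = G.dist a m') : m = m' := by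
  unfold onPath at h h'
  obtain ⟨p, hp⟩ := hG.connected.exists_walk_length_eq_dist a m
  obtain ⟨q, hq⟩ := hG.connected.exists_walk_length_eq_dist m b
  obtain ⟨p', hp'⟩ := hG.connected.exists_walk_length_eq_dist a m'
  obtain ⟨q', hq'⟩ := hG.connected.exists_walk_length_eq_dist m' b
  have h1 : (p.append q).IsPath :=
    SimpleGraph.Walk.isPath_of_length_eq_dist _ (by rw [SimpleGraph.Walk.length_append]; omega)
  have h2 : (p'.append q').IsPath :=
    SimpleGraph.Walk.isPath_of_length_eq_dist _ (by rw [SimpleGraph.Walk.length_append]; omega)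
  have h3 := (hG.existsUnique_path a b).unique h1 h2
  have h4 : (p.append q).getVert p.length = m := by
    simp [SimpleGraph.Walk.getVert_append]
  have h5 : (p'.append q').getVert p'.length = m' := by
    simp [SimpleGraph.Walk.getVert_append]
  rw [← h4, ← h5, h3, hp, hp', he]

theorem aux_exists {V : Type*} {G : SimpleGraph V} (hG : G.IsTree) (a b : V) (z : ℕ)
    (hz : z ≤ G.dist a b) : ∃ m, onPath G a m b ∧ G.dist a m = z := by
  obtain ⟨p, hp⟩ := hG.connected.exists_walk_length_eq_dist a b
  have h1 := SimpleGraph.dist_le (p.take z)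
  have h2 := SimpleGraph.dist_le (p.drop z)
  have h3 := hG.connected.dist_triangle (u := a) (v := p.getVert z) (w := b)
  rw [SimpleGraph.Walk.take_length] at h1
  rw [SimpleGraph.Walk.drop_length] at h2
  refine ⟨p.getVert z, ?_, ?_⟩
  · unfold onPath; omega
  · omega

theorem aux_median {V : Type*} {G : SimpleGraph V} (hG : G.IsTree) (u w : V) (n : ℕ) :
    ∀ v, G.dist v w = n → ∃ m, isMedian G m u v w := by
  have tri : ∀ a b c, G.dist a c ≤ G.dist a b + G.dist b c :=
    fun a b c => hG.connected.dist_triangle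
  have comm : ∀ a b, G.dist a b = G.dist b a := fun a b => SimpleGraph.dist_comm
  induction n with
  | zero =>
    intro v hv
    have := (hG.connected.dist_eq_zero_iff).1 hv
    subst this
    exact ⟨v, by simp [isMedian, onPath]⟩
  | succ n ih =>
    intro v hv
    obtain ⟨v', h1, h2⟩ := aux_exists hG v w 1 (by omega)
    unfold onPath at h1
    obtain ⟨m, hm1, hm2, hm3⟩ := ih v' (by omega)
    unfold onPath at hm1 hm2 hm3
    have hadj : G.Adj v v' := SimpleGraph.dist_eq_one_iff_adj.1 h2
    have hvm : G.dist v m = 1 + G.dist v' m := by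
      have := tri v m w
      have := tri v v' m
      omega
    have c1 := comm v' m
    have c2 := comm v m
    rcases hG.dist_eq_dist_add_one_of_adj u hadj with h | h
    · exact ⟨m, by unfold onPath; omega, hm2, by unfold onPath; omega⟩
    · by_cases hmv : G.dist v' m = 0
      · have := (hG.connected.dist_eq_zero_iff).1 hmv
        subst this
        have := SimpleGraph.dist_self (G := G) (v := v)
        refine ⟨v, ?_, ?_, ?_⟩ <;> unfold onPath <;> omega
      · exfalso
        obtain ⟨x, hx1, hx2⟩ := aux_exists hG v' m 1 (by omega)
        unfold onPath at hx1
        have e1 := comm u v'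
        have e2 := comm u v
        have e3 := comm u m
        have e4 := comm v v'
        have hx : x = v := by
          apply aux_unique hG (a := v') (b := u)
          · unfold onPath
            have := tri x m u
            have := tri v' x u
            omega
          · unfold onPath; omega
          · omega
        subst hx
        omega

theorem aux_half {V : Type*} {G : SimpleGraph V} (hG : G.IsTree) {r v q l w : V}
    (h1 : onPath G v l q) (h2 : onPath G v l r) (hw : onPath G v w q)
    (hz : G.dist v w ≤ G.dist v l) : onPath G v w r := by
  have tri : ∀ a b c, G.dist a c ≤ G.dist a b + G.dist b c :=
    fun a b c => hG.connected.dist_triangle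
  obtain ⟨x, hx1, hx2⟩ := aux_exists hG v l _ hz
  have hx : x = w := by
    refine aux_unique hG (a := v) (b := q) ?_ hw hx2
    unfold onPath at *
    have := tri x l q
    have := tri v x q
    omega
  subst hx
  unfold onPath at *
  have := tri x l r
  have := tri v x r
  omega

theorem aux_lca {V : Type*} {G : SimpleGraph V} (hG : G.IsTree) {r v q l : V}
    (hl : isLCA G r l v q) : onPath G v l q := by
  have tri : ∀ a b c, G.dist a c ≤ G.dist a b + G.dist b c :=
    fun a b c => hG.connected.dist_triangle
  obtain ⟨m, hm1, hm2, hm3⟩ := aux_median hG r q _ v rfl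
  obtain ⟨h1, h2, h3⟩ := hl
  have h4 := h3 m hm1 hm2
  unfold isAncestor onPath at *
  have c1 := SimpleGraph.dist_comm (G := G) (u := v) (v := m)
  have c2 := SimpleGraph.dist_comm (G := G) (u := v) (v := l)
  have := tri v l q
  omega

/-- Correctness of the `Move` procedure: with `l` the LCA of `v` and `q`,
`0 ≤ z ≤ dist(v,q)`, and `w` the unique vertex on the path from `v` to `q` with
`dist(v,w) = z`: if `z ≤ dist(v,l)` then `w` is the unique vertex on the path
from `v` to `r` at distance `z` from `v`; if `z > dist(v,l)` then `w` is the
unique vertex on the path from `q` to `r` at distance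
`dist(l,q) − (z − dist(v,l))` from `q`. -/
theorem move_correct {V : Type*} [Fintype V] (G : SimpleGraph V)
    (hG : G.IsTree) (r v q l : V) (hl : isLCA G r l v q)
    (z : ℕ) (hz : z ≤ G.dist v q)
    (w : V) (hw : onPath G v w q ∧ G.dist v w = z) :
    (z ≤ G.dist v l →
      (onPath G v w r ∧ G.dist v w = z) ∧
      ∀ w' : V, onPath G v w' r → G.dist v w' = z → w' = w) ∧
    (G.dist v l < z →
      (onPath G q w r ∧ G.dist q w = G.dist l q - (z - G.dist v l)) ∧
      ∀ w' : V, onPath G q w' r →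
        G.dist q w' = G.dist l q - (z - G.dist v l) → w' = w) := by
  have hp := aux_lca hG hl
  obtain ⟨hl1, hl2, -⟩ := hl
  obtain ⟨hw, hwz⟩ := hw
  have c : ∀ a m b, onPath G a m b → onPath G b m a := by
    intro a m b h
    unfold onPath at *
    rw [SimpleGraph.dist_comm (u := b) (v := m), SimpleGraph.dist_comm (u := m) (v := a),
      SimpleGraph.dist_comm (u := b) (v := a)]
    omega
  constructor
  · intro h
    have hA := aux_half hG hp (c _ _ _ hl1) hw (by omega)
    exact ⟨⟨hA, hwz⟩, fun w' h1 h2 => aux_unique hG h1 hA (by omega)⟩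
  · intro h
    have hd : G.dist q w = G.dist l q - (z - G.dist v l) := by
      have := SimpleGraph.dist_comm (G := G) (u := q) (v := w)
      unfold onPath at hp hw
      omega
    have hA := aux_half hG (c _ _ _ hp) (c _ _ _ hl2) (c _ _ _ hw) (by
      rw [hd, SimpleGraph.dist_comm (u := q) (v := l)]; omega)
    exact ⟨⟨hA, hd⟩, fun w' h1 h2 => aux_unique hG h1 hA (by omega)⟩
end
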